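/- (Lemma 5.1(i), variance sandwich.) Let 0 < β_i ≤ 2 for i = 1,…,d, L > 0, p ∈ 𝒫_d(β,L) and t ∈ ℝ^d. Set c₈(β,L) := min_{i=1,…,d} ( 2dL ∫ |x_i|^{β_i} K²(x) dλ^d(x) / ‖K‖₂² )^{−1/β_i}. Then for every bandwidth h = (h_1,…,h_d) with 0 < h_i ≤ c₈(β,L) p(t)^{1/β_i} for all i: (1/2) ‖K‖₂² p(t) / (n ∏_{i=1}^d h_i) ≤ n^{−1} ((K_h)² ∗ p)(t) ≤ (3/2) ‖K‖₂² p(t) / (n ∏_{i=1}^d h_i). -/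

import Mathlib

open MeasureTheory Real
open scoped ENNReal BigOperators

noncomputable section

/-- `Vec d` is `ℝ^d` (with the product structure, used for anisotropic statements). -/
abbrev Vec (d : ℕ) := Fin d → ℝ

/-- Samples of size `n` from `ℝ^d`. -/
abbrev Sample (d n : ℕ) := Fin n → Vec d

/-- The largest integer strictly smaller than `b` (for `b > 0`), i.e. `⌊b⌋` in the paper's
anisotropic Hölder class notation. -/
def hfl (b : ℝ) : ℕ := ⌈b⌉₊ - 1

/-- One-dimensional Taylor polynomial of `f` at `y'` of degree `l`, evaluated at `y`. -/
def taylorPoly (f : ℝ → ℝ) (l : ℕ) (y' y : ℝ) : ℝ :=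
  ∑ k ∈ Finset.range (l + 1), iteratedDeriv k f y' / (Nat.factorial k : ℝ) * (y - y') ^ k

/-- The slice of `f : ℝ^d → ℝ` along coordinate `i` through the point `x`. -/
def sliceFun {d : ℕ} (f : Vec d → ℝ) (i : Fin d) (x : Vec d) : ℝ → ℝ :=
  fun y => f (Function.update x i y)

/-- Anisotropic Hölder condition with exponents `β = (β_1, …, β_d)` and constant `L`:
in each coordinate `i`, the slices admit derivatives up to order `⌊β i⌋` (the largest
integer strictly less than `β i`) and the Taylor remainder of degree `⌊β i⌋` is bounded
by `L |y - y'| ^ (β i)`, uniformly in the remaining coordinates. For `β i ≤ 1` this is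
the usual coordinatewise Hölder condition. -/
def HolderAniso (d : ℕ) (β : Vec d) (L : ℝ) (f : Vec d → ℝ) : Prop :=
  ∀ i : Fin d,
    (∀ x : Vec d, ContDiff ℝ (hfl (β i)) (sliceFun f i x)) ∧
    ∀ (x : Vec d) (y y' : ℝ),
      |sliceFun f i x y - taylorPoly (sliceFun f i x) (hfl (β i)) y' y| ≤ L * |y - y'| ^ (β i)

/-- `p` is a probability density on `ℝ^d` (w.r.t. Lebesgue measure). -/
def IsProbDensity (d : ℕ) (p : Vec d → ℝ) : Prop :=
  Measurable p ∧ (∀ x, 0 ≤ p x) ∧ ∫ x, p x = 1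

/-- The class `𝒫_d(β, L)` of anisotropic Hölder-smooth probability densities. -/
def Pclass (d : ℕ) (β : Vec d) (L : ℝ) (p : Vec d → ℝ) : Prop :=
  IsProbDensity d p ∧ HolderAniso d β L p

/-- The unnormalized harmonic mean `β̄ = (∑ 1/β_i)⁻¹`. -/
def betaBar {d : ℕ} (β : Vec d) : ℝ := (∑ i, (β i)⁻¹)⁻¹

/-- `c₁(β, L) = sup { ‖p‖_∞ : p ∈ 𝒫_d(β, L) }`. -/
def c1const (d : ℕ) (β : Vec d) (L : ℝ) : ℝ :=
  sSup {c | ∃ p x, Pclass d β L p ∧ c = p x}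

/-- The measure on `ℝ^d` with Lebesgue density `p`. -/
def pdfMeasure (d : ℕ) (p : Vec d → ℝ) : Measure (Vec d) :=
  volume.withDensity fun x => ENNReal.ofReal (p x)

/-- The joint law `P^{⊗n}` of an i.i.d. sample of size `n` from the density `p`. -/
def jointMeasure (d n : ℕ) (p : Vec d → ℝ) : Measure (Sample d n) :=
  Measure.pi fun _ => pdfMeasure d p

/-- The `p`-dependent rate `ψ^n_{x,β} = min{ x, (x/n)^{β̄/(2β̄+1)} }` (with `bb = β̄`). -/
def psiRate (n : ℕ) (bb x : ℝ) : ℝ := min x ((x / n) ^ (bb / (2 * bb + 1)))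

end

noncomputable section

/-- `K` is a product kernel `K(x) = ∏ K_i(x_i)` whose factors are nonnegative, symmetric,
supported on `[-1,1]`, continuous on their support, integrate to one and are positive at `0`. -/
def IsProductKernel (d : ℕ) (K : Vec d → ℝ) : Prop :=
  ∃ Ki : Fin d → (ℝ → ℝ),
    (∀ x, K x = ∏ i, Ki i (x i)) ∧
    ∀ i : Fin d,
      (∀ y, 0 ≤ Ki i y) ∧ (∀ y, Ki i (-y) = Ki i y) ∧
      (∀ y, y ∉ Set.Icc (-1 : ℝ) 1 → Ki i y = 0) ∧
      ContinuousOn (Ki i) (Set.Icc (-1) 1) ∧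
      (∫ y, Ki i y = 1) ∧ 0 < Ki i 0

/-- The rescaled kernel `K_h(x) = (∏ h_i)⁻¹ K(x_1/h_1, …, x_d/h_d)`. -/
def scaledKernel (d : ℕ) (K : Vec d → ℝ) (h : Vec d) (x : Vec d) : ℝ :=
  (∏ i, h i)⁻¹ * K (fun i => x i / h i)

/-- The kernel density estimator `p̂_{n,h}(t) = n⁻¹ ∑_i K_h(t - X_i)`. -/
def kde (d n : ℕ) (K : Vec d → ℝ) (h : Vec d) (X : Sample d n) (t : Vec d) : ℝ :=
  (n : ℝ)⁻¹ * ∑ i, scaledKernel d K h (fun j => t j - X i j)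

/-- `‖K‖_sup`. -/
def KsupNorm (d : ℕ) (K : Vec d → ℝ) : ℝ := ⨆ x, |K x|

/-- `‖K‖₂² = ∫ K² dλ^d`. -/
def K2sq (d : ℕ) (K : Vec d → ℝ) : ℝ := ∫ x, (K x) ^ 2

/-- The exact variance proxy `σ_t²(h) = n⁻¹ ((K_h)² ∗ p)(t)`. -/
def sigmaSq (d n : ℕ) (K : Vec d → ℝ) (p : Vec d → ℝ) (h : Vec d) (t : Vec d) : ℝ :=
  (n : ℝ)⁻¹ * ∫ y, (scaledKernel d K h (fun i => t i - y i)) ^ 2 * p y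

/-- The truncation level `log²n / (n² ∏ h_i²)`. -/
def truncLevel (d n : ℕ) (h : Vec d) : ℝ :=
  (Real.log n) ^ 2 / ((n : ℝ) ^ 2 * (∏ i, h i) ^ 2)

/-- `σ²_{t,trunc}(h) = max{ log²n/(n² ∏ h_i²), σ_t²(h) }`. -/
def sigmaSqTrunc (d n : ℕ) (K : Vec d → ℝ) (p : Vec d → ℝ) (h : Vec d) (t : Vec d) : ℝ :=
  max (truncLevel d n h) (sigmaSq d n K p h t)

/-- The empirical variance `σ̃_t²(h) = (n² ∏ h_i²)⁻¹ ∑_i K²((t - X_i)/h)`. -/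
def sigmaTildeSq (d n : ℕ) (K : Vec d → ℝ) (h : Vec d) (X : Sample d n) (t : Vec d) : ℝ :=
  ((n : ℝ) ^ 2 * (∏ i, h i) ^ 2)⁻¹ * ∑ i, (K (fun j => (t j - X i j) / h j)) ^ 2

/-- `σ̃²_{t,trunc}(h) = max{ log²n/(n² ∏ h_i²), σ̃_t²(h) }`. -/
def sigmaTildeSqTrunc (d n : ℕ) (K : Vec d → ℝ) (h : Vec d) (X : Sample d n) (t : Vec d) : ℝ :=
  max (truncLevel d n h) (sigmaTildeSq d n K h X t)

/-- Membership of the multi-index `j` in the dyadic grid `𝒥`, i.e. `∑ j_i ≤ ⌊log₂(n/log²n)⌋`. -/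
def gridOK (d n : ℕ) (j : Fin d → ℕ) : Prop :=
  ((∑ i, j i : ℕ) : ℝ) ≤ Real.logb 2 ((n : ℝ) / (Real.log n) ^ 2)

/-- The bandwidth `(2^{-j_1}, …, 2^{-j_d})` associated with a multi-index `j`. -/
def bwOf (d : ℕ) (j : Fin d → ℕ) : Vec d := fun i => (2 : ℝ) ^ (-(j i : ℝ))

/-- The bias upper bound `B_t(h) = L ∑_i c_{9,i}(β) h_i^{β_i}`,
with `c_{9,i}(β) = ∫ |x_i|^{β_i} |K(x)| dλ^d(x)`. -/
def biasBound (d : ℕ) (K : Vec d → ℝ) (β : Vec d) (L : ℝ) (h : Vec d) : ℝ :=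
  L * ∑ i, (∫ x : Vec d, |x i| ^ (β i) * |K x|) * h i ^ (β i)

/-- The bias `b_t(h) = p(t) - (K_h ∗ p)(t)`. -/
def biasAt (d : ℕ) (K : Vec d → ℝ) (p : Vec d → ℝ) (h : Vec d) (t : Vec d) : ℝ :=
  p t - ∫ y, scaledKernel d K h (fun i => t i - y i) * p y

end

noncomputable section
/-- The constant `c₈(β,L) = min_i ( 2dL ∫ |x_i|^{β_i} K²(x) dλ^d(x) / ‖K‖₂² )^{-1/β_i}`. -/
def c8const (d : ℕ) (K : Vec d → ℝ) (β : Vec d) (L : ℝ) : ℝ :=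
  ⨅ i : Fin d,
    (2 * d * L * (∫ x : Vec d, |x i| ^ (β i) * (K x) ^ 2) / K2sq d K) ^ (-(β i)⁻¹)
end

/-!
Substituting `y = t - h u` turns `((K_h)² ∗ p)(t)` into `(∏ h_i)⁻¹ ∫ K²(u) p(t - h u) du`, so the
claim is a bound on `∫ K²(u) (p(t - h u) - p(t)) du`. Move the coordinates from `t` to `t - h u` one
at a time. As `K²` is even in the coordinate being moved, moving it changes the integral by half the
integral of a symmetric second difference of `p`. There the first-order Taylor term cancels, which
leaves at most `L h_i^{β_i} ∫ |u_i|^{β_i} K²`. The constant `c₈` is chosen to make each of these `d`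
terms at most `‖K‖₂² p(t) / (2d)`.
-/

section Taylor

lemma hfl_le_one {b : ℝ} (hb : b ≤ 2) : hfl b ≤ 1 := by
  have hceil : ⌈b⌉₊ ≤ 2 := Nat.ceil_le.2 (by exact_mod_cast hb)
  unfold hfl
  omega

lemma taylorPoly_add_add_taylorPoly_sub (f : ℝ → ℝ) {l : ℕ} (hl : l ≤ 1) (y s : ℝ) :
    taylorPoly f l y (y + s) + taylorPoly f l y (y - s) = 2 * f y := by
  interval_cases l <;>
    simp only [taylorPoly, Finset.sum_range_succ, Finset.sum_range_zero, iteratedDeriv_zero,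
      add_sub_cancel_left, sub_sub_cancel_left, Nat.factorial, Nat.cast_one] <;>
    ring

lemma HolderAniso.abs_second_difference_le {d : ℕ} {β : Vec d} {L : ℝ} {p : Vec d → ℝ}
    (hp : HolderAniso d β L p) {i : Fin d} (hi : β i ≤ 2) (x : Vec d) (y s : ℝ) :
    |p (Function.update x i (y + s)) + p (Function.update x i (y - s))
      - 2 * p (Function.update x i y)| ≤ 2 * (L * |s| ^ β i) := by
  have hplus := (hp i).2 x (y + s) y
  have hminus := (hp i).2 x (y - s) y
  rw [add_sub_cancel_left] at hplus
  rw [sub_sub_cancel_left, abs_neg] at hminus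
  have hcancel := taylorPoly_add_add_taylorPoly_sub (sliceFun p i x) (hfl_le_one hi) y s
  calc _ = |(sliceFun p i x (y + s) - taylorPoly (sliceFun p i x) (hfl (β i)) y (y + s))
          + (sliceFun p i x (y - s) - taylorPoly (sliceFun p i x) (hfl (β i)) y (y - s))| := by
        congr 1
        simp only [sliceFun] at hcancel ⊢
        linarith
    _ ≤ L * |s| ^ β i + L * |s| ^ β i := (abs_add_le _ _).trans (add_le_add hplus hminus)
    _ = 2 * (L * |s| ^ β i) := (two_mul _).symm

end Taylor

section Symmetrization

lemma abs_integral_sub_integral_le_of_symmetrized_le {α : Type*} [MeasurableSpace α]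
    {μ : Measure α} {T : α → α} (hT : MeasurePreserving T μ μ) {F G B : α → ℝ}
    (hF : Integrable F μ) (hG : Integrable G μ) (hB : Integrable B μ)
    (hle : ∀ a, |F a + F (T a) - 2 * G a| ≤ 2 * B a) :
    |∫ a, F a ∂μ - ∫ a, G a ∂μ| ≤ ∫ a, B a ∂μ := by
  have hFT : Integrable (fun a => F (T a)) μ := hT.integrable_comp_of_integrable hF
  have hinv : ∫ a, F (T a) ∂μ = ∫ a, F a ∂μ := by
    have hF' : AEStronglyMeasurable F (μ.map T) := hT.map_eq.symm ▸ hF.aestronglyMeasurable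
    rw [← integral_map hT.aemeasurable hF', hT.map_eq]
  have hdouble : ∫ a, (F a + F (T a) - 2 * G a) ∂μ = 2 * (∫ a, F a ∂μ - ∫ a, G a ∂μ) := by
    rw [integral_sub (hF.fun_add hFT) (hG.const_mul 2), integral_add hF hFT, hinv,
      integral_const_mul]
    ring
  have hnorm := norm_integral_le_of_norm_le (hB.const_mul 2)
    (ae_of_all μ fun a => (Real.norm_eq_abs _).trans_le (hle a))
  rw [hdouble, integral_const_mul, Real.norm_eq_abs, abs_mul, abs_two] at hnorm
  exact le_of_mul_le_mul_left hnorm two_pos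

variable {ι : Type*} [DecidableEq ι]

/-- The reflection of `ℝ^ι` in the hyperplane `u k = 0`. -/
def reflectCoord (k : ι) (u : ι → ℝ) : ι → ℝ := Function.update u k (-u k)

/-- Functions on `ℝ^ι` that are even in each coordinate separately: the symmetry of a product
kernel, and the only one that the bias estimates need. -/
def IsCoordEven (w : (ι → ℝ) → ℝ) : Prop := ∀ k u, w (reflectCoord k u) = w u

lemma measurePreserving_reflectCoord [Fintype ι] (k : ι) :
    MeasurePreserving (reflectCoord k) := by
  have hpi := volume_preserving_pi (f := Function.update (fun _ : ι => (id : ℝ → ℝ)) k Neg.neg)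
    fun i => by
      rcases eq_or_ne i k with rfl | hik
      · simpa using Measure.measurePreserving_neg volume
      · simpa [hik] using MeasurePreserving.id volume
  convert hpi using 1
  ext u i
  rcases eq_or_ne i k with rfl | hik <;> simp [reflectCoord, *]

end Symmetrization

section PartialShift

variable {ι : Type*} [DecidableEq ι]

/-- The point whose coordinates in `s` are those of `t - h u` and whose other coordinates are those
of `t`; it interpolates between `t` and `t - h u` as `s` grows. -/
def partialShift (t h : ι → ℝ) (s : Finset ι) (u : ι → ℝ) : ι → ℝ := s.piecewise (t - h * u) t

lemma partialShift_empty (t h u : ι → ℝ) : partialShift t h ∅ u = t :=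
  Finset.piecewise_empty _ _

lemma partialShift_univ [Fintype ι] (t h u : ι → ℝ) :
    partialShift t h Finset.univ u = t - h * u :=
  Finset.piecewise_univ _ _

lemma partialShift_insert (t h : ι → ℝ) (s : Finset ι) (k : ι) (u : ι → ℝ) :
    partialShift t h (insert k s) u = Function.update (partialShift t h s u) k (t k - h k * u k) :=
  Finset.piecewise_insert _ _ _ _

lemma update_partialShift_of_notMem (t h : ι → ℝ) {s : Finset ι} {k : ι} (hk : k ∉ s)
    (u : ι → ℝ) : Function.update (partialShift t h s u) k (t k) = partialShift t h s u := by
  rw [partialShift, Finset.update_piecewise_of_notMem _ _ _ hk, Function.update_eq_self]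

lemma partialShift_reflectCoord_of_notMem (t h : ι → ℝ) {s : Finset ι} {k : ι} (hk : k ∉ s)
    (u : ι → ℝ) : partialShift t h s (reflectCoord k u) = partialShift t h s u := by
  refine Finset.piecewise_congr _ (fun i hi => ?_) fun _ _ => rfl
  have hik : i ≠ k := ne_of_mem_of_not_mem hi hk
  simp [reflectCoord, hik]

lemma measurable_partialShift (t h : ι → ℝ) (s : Finset ι) : Measurable (partialShift t h s) := by
  refine measurable_pi_lambda _ fun i => ?_
  by_cases hi : i ∈ s <;> simp only [partialShift, Finset.piecewise, hi, if_true, if_false] <;>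
    fun_prop

end PartialShift

namespace HolderAniso

variable {d : ℕ} {β : Vec d} {L : ℝ} {p : Vec d → ℝ} {w : Vec d → ℝ}

lemma abs_partialShift_insert_add_reflectCoord_le (hp : HolderAniso d β L p) (t h : Vec d)
    {s : Finset (Fin d)} {k : Fin d} (hβ : β k ≤ 2) (hk : k ∉ s) (u : Vec d) :
    |p (partialShift t h (insert k s) u) + p (partialShift t h (insert k s) (reflectCoord k u))
        - 2 * p (partialShift t h s u)| ≤ 2 * (L * |h k| ^ β k * |u k| ^ β k) := by
  have hsecond := hp.abs_second_difference_le hβ (partialShift t h s u) (t k) (h k * u k)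
  have hreflect : t k - h k * reflectCoord k u k = t k + h k * u k := by simp [reflectCoord]
  rw [update_partialShift_of_notMem t h hk, abs_mul,
    Real.mul_rpow (abs_nonneg _) (abs_nonneg _)] at hsecond
  rwa [partialShift_insert, partialShift_insert, partialShift_reflectCoord_of_notMem t h hk,
    hreflect, add_comm (p _), mul_assoc L]

lemma integrable_mul_partialShift (hp : HolderAniso d β L p) (hβ : ∀ i, β i ≤ 2)
    (hmeas : Measurable p) (hnonneg : ∀ x, 0 ≤ p x) (hw : Integrable w)
    (hmoment : ∀ i, Integrable fun u => |u i| ^ β i * w u) (t h : Vec d) (s : Finset (Fin d)) :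
    Integrable fun u => w u * p (partialShift t h s u) := by
  induction s using Finset.induction_on with
  | empty => simpa only [partialShift_empty] using hw.mul_const (p t)
  | insert k s hk ih =>
    have hdom : Integrable fun u =>
        2 * (w u * p (partialShift t h s u)) + 2 * (L * |h k| ^ β k) * (|u k| ^ β k * w u) :=
      (ih.const_mul 2).add ((hmoment k).const_mul _)
    refine hdom.mono (hw.aestronglyMeasurable.mul
      (hmeas.comp (measurable_partialShift t h _)).aestronglyMeasurable) (ae_of_all _ fun u => ?_)
    have hgrowth : p (partialShift t h (insert k s) u)
        ≤ 2 * p (partialShift t h s u) + 2 * (L * |h k| ^ β k) * |u k| ^ β k := by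
      have hsecond := (abs_le.1
        (hp.abs_partialShift_insert_add_reflectCoord_le t h (hβ k) hk u)).2
      linarith [hnonneg (partialShift t h (insert k s) (reflectCoord k u))]
    calc ‖w u * p (partialShift t h (insert k s) u)‖
        ≤ ‖w u * (2 * p (partialShift t h s u) + 2 * (L * |h k| ^ β k) * |u k| ^ β k)‖ := by
          rw [norm_mul, norm_mul]
          gcongr
          exact abs_le_abs_of_nonneg (hnonneg _) hgrowth
      _ = _ := by congr 1; ring

lemma abs_integral_mul_partialShift_insert_sub_le (hp : HolderAniso d β L p)
    (hβ : ∀ i, β i ≤ 2) (hmeas : Measurable p) (hnonneg : ∀ x, 0 ≤ p x) (hw : Integrable w)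
    (heven : IsCoordEven w) (hmoment : ∀ i, Integrable fun u => |u i| ^ β i * w u) (t h : Vec d)
    {s : Finset (Fin d)} {k : Fin d} (hk : k ∉ s) :
    |(∫ u, w u * p (partialShift t h (insert k s) u)) - ∫ u, w u * p (partialShift t h s u)|
      ≤ L * |h k| ^ β k * ∫ u, |u k| ^ β k * |w u| := by
  have hint := hp.integrable_mul_partialShift hβ hmeas hnonneg hw hmoment t h
  have habs_moment : Integrable fun u => |u k| ^ β k * |w u| := by
    simpa only [abs_mul, Real.abs_rpow_of_nonneg (abs_nonneg _), abs_abs] using (hmoment k).abs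
  rw [← integral_const_mul]
  refine abs_integral_sub_integral_le_of_symmetrized_le (measurePreserving_reflectCoord k)
    (hint _) (hint s) (habs_moment.const_mul _) fun u => ?_
  calc _ = |w u| * |p (partialShift t h (insert k s) u)
          + p (partialShift t h (insert k s) (reflectCoord k u))
          - 2 * p (partialShift t h s u)| := by
        rw [heven k u, ← abs_mul]
        congr 1
        ring
    _ ≤ |w u| * (2 * (L * |h k| ^ β k * |u k| ^ β k)) := by
        gcongr
        exact hp.abs_partialShift_insert_add_reflectCoord_le t h (hβ k) hk u
    _ = _ := by ring

lemma abs_integral_mul_partialShift_sub_le (hp : HolderAniso d β L p)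
    (hβ : ∀ i, β i ≤ 2) (hmeas : Measurable p) (hnonneg : ∀ x, 0 ≤ p x) (hw : Integrable w)
    (heven : IsCoordEven w) (hmoment : ∀ i, Integrable fun u => |u i| ^ β i * w u) (t h : Vec d)
    (s : Finset (Fin d)) :
    |(∫ u, w u * p (partialShift t h s u)) - (∫ u, w u) * p t|
      ≤ ∑ i ∈ s, L * |h i| ^ β i * ∫ u, |u i| ^ β i * |w u| := by
  induction s using Finset.induction_on with
  | empty => simp [partialShift_empty, integral_mul_const]
  | insert k s hk ih =>
    rw [Finset.sum_insert hk]
    exact (abs_sub_le _ _ _).trans (add_le_add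
      (hp.abs_integral_mul_partialShift_insert_sub_le hβ hmeas hnonneg hw heven hmoment t h hk) ih)

end HolderAniso

section Rescaling

lemma integral_comp_sub_mul_pi {ι E : Type*} [Fintype ι] [NormedAddCommGroup E]
    [NormedSpace ℝ E] (F : (ι → ℝ) → E) (t : ι → ℝ) {h : ι → ℝ} (hh : ∀ i, h i ≠ 0) :
    ∫ u, F (t - h * u) = |∏ i, h i|⁻¹ • ∫ y, F y := by
  classical
  have hprod : ∏ i, h i ≠ 0 := Finset.prod_ne_zero_iff.2 fun i _ => hh i
  let scale : (ι → ℝ) ≃ₜ (ι → ℝ) :=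
    Homeomorph.piCongrRight fun i => Homeomorph.mulLeft₀ (h i) (hh i)
  have hdiag : ⇑(Matrix.toLin' (Matrix.diagonal h)) = scale := by
    ext u i
    simp [Matrix.mulVec_diagonal, scale]
  have hvol : ENNReal.ofReal |∏ i, h i| • Measure.map scale volume = volume := by
    rw [← hdiag, ← Matrix.det_diagonal]
    exact Real.smul_map_diagonal_volume_pi (by rwa [Matrix.det_diagonal])
  calc ∫ u, F (t - h * u) = ∫ v, F (t - v) ∂(Measure.map scale volume) :=
        (scale.measurableEmbedding.integral_map fun v => F (t - v)).symm
    _ = |∏ i, h i|⁻¹ • ∫ v, F (t - v) := by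
        conv_rhs => rw [← hvol, integral_smul_measure, ENNReal.toReal_ofReal (abs_nonneg _)]
        rw [inv_smul_smul₀ (abs_ne_zero.2 hprod)]
    _ = |∏ i, h i|⁻¹ • ∫ y, F y := by rw [integral_sub_left_eq_self F volume t]

lemma sigmaSq_eq {d : ℕ} (n : ℕ) (K p : Vec d → ℝ) {h : Vec d} (hh : ∀ i, h i ≠ 0) (t : Vec d) :
    sigmaSq d n K p h t = (∫ u, K u ^ 2 * p (t - h * u)) / (n * |∏ i, h i|) := by
  have hprod : |∏ i, h i| ≠ 0 := abs_ne_zero.2 (Finset.prod_ne_zero_iff.2 fun i _ => hh i)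
  have hpull : ∀ u, scaledKernel d K h (fun i => t i - (t - h * u) i) ^ 2 * p (t - h * u)
      = (|∏ i, h i| ^ 2)⁻¹ * (K u ^ 2 * p (t - h * u)) := fun u => by
    have harg : (fun i => (t i - (t - h * u) i) / h i) = u :=
      funext fun i => by simp [mul_div_cancel_left₀ _ (hh i)]
    rw [scaledKernel, harg, sq_abs]
    ring
  have hchange := integral_comp_sub_mul_pi
    (fun y => scaledKernel d K h (fun i => t i - y i) ^ 2 * p y) t hh
  simp only [hpull, integral_const_mul, smul_eq_mul] at hchange
  rw [sigmaSq, (eq_inv_mul_iff_mul_eq₀ (inv_ne_zero hprod)).2 hchange.symm]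
  field_simp

end Rescaling

section Bandwidth

lemma mul_rpow_le_of_le_rpow_neg_inv_mul_rpow_inv {A b x r : ℝ} (hA : 0 ≤ A) (hb : 0 ≤ b)
    (hx : 0 ≤ x) (hr : 0 < r) (hle : b ≤ A ^ (-r⁻¹) * x ^ r⁻¹) : A * b ^ r ≤ x := by
  rcases hA.eq_or_lt with rfl | hA
  · rwa [zero_mul]
  · rw [Real.rpow_neg hA.le, ← Real.inv_rpow hA.le, ← Real.mul_rpow (inv_nonneg.2 hA.le) hx,
      Real.le_rpow_inv_iff_of_pos hb (by positivity) hr] at hle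
    exact (le_inv_mul_iff₀ hA).1 hle

lemma mul_rpow_mul_moment_le_of_le_c8const {d : ℕ} {K : Vec d → ℝ}
    (hK : Integrable fun u => K u ^ 2) {β : Vec d} {L : ℝ} (hL : 0 ≤ L) {i : Fin d}
    (hβ : 0 < β i) {b x : ℝ} (hb : 0 ≤ b) (hx : 0 ≤ x)
    (hle : b ≤ c8const d K β L * x ^ (β i)⁻¹) :
    L * b ^ β i * (∫ u : Vec d, |u i| ^ β i * K u ^ 2) ≤ K2sq d K * x / (2 * d) := by
  have hd : (0 : ℝ) < d := Nat.cast_pos.2 i.pos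
  set M := ∫ u : Vec d, |u i| ^ β i * K u ^ 2
  have hM_nonneg : 0 ≤ M := integral_nonneg fun u => by positivity
  have hK_nonneg : 0 ≤ K2sq d K := integral_nonneg fun u => sq_nonneg _
  have hmin : c8const d K β L ≤ (2 * d * L * M / K2sq d K) ^ (-(β i)⁻¹) :=
    ciInf_le (Set.finite_range _).bddBelow i
  have hscaled : 2 * d * L * M / K2sq d K * b ^ β i ≤ x :=
    mul_rpow_le_of_le_rpow_neg_inv_mul_rpow_inv (by positivity) hb hx hβ
      (hle.trans (mul_le_mul_of_nonneg_right hmin (Real.rpow_nonneg hx _)))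
  rcases hK_nonneg.eq_or_lt with hK_zero | hK_pos
  · have hae : (fun u => K u ^ 2) =ᵐ[volume] 0 :=
      (integral_eq_zero_iff_of_nonneg (fun u => sq_nonneg _) hK).1 hK_zero.symm
    have hM_zero : M = 0 := integral_eq_zero_of_ae (hae.mono fun u hu =>
      mul_eq_zero_of_right _ hu)
    simp [hM_zero, ← hK_zero]
  · rw [div_mul_eq_mul_div, div_le_iff₀ hK_pos] at hscaled
    rw [le_div_iff₀ (by positivity)]
    linarith

end Bandwidth

namespace IsProductKernel

variable {d : ℕ} {K : Vec d → ℝ}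

lemma isCoordEven (hK : IsProductKernel d K) : IsCoordEven K := by
  obtain ⟨Ki, hprod, hKi⟩ := hK
  intro k u
  rw [hprod, hprod]
  refine Finset.prod_congr rfl fun i _ => ?_
  rcases eq_or_ne i k with rfl | hik
  · simpa [reflectCoord] using (hKi i).2.1 (u i)
  · simp [reflectCoord, hik]

lemma continuousOn_Icc (hK : IsProductKernel d K) : ContinuousOn K (Set.Icc (-1) 1) := by
  obtain ⟨Ki, hprod, hKi⟩ := hK
  rw [funext hprod]
  exact continuousOn_finsetProd _ fun i _ => (hKi i).2.2.2.1.comp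
    (continuous_apply i).continuousOn fun u hu => ⟨hu.1 i, hu.2 i⟩

lemma support_subset_Icc (hK : IsProductKernel d K) : K.support ⊆ Set.Icc (-1) 1 := by
  obtain ⟨Ki, hprod, hKi⟩ := hK
  intro u hu
  have hmem : ∀ i, u i ∈ Set.Icc (-1 : ℝ) 1 := fun i => by
    by_contra hi
    exact hu ((hprod u).trans (Finset.prod_eq_zero (Finset.mem_univ i) ((hKi i).2.2.1 _ hi)))
  exact ⟨fun i => (hmem i).1, fun i => (hmem i).2⟩

lemma integrable_continuous_mul_sq (hK : IsProductKernel d K) {g : Vec d → ℝ}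
    (hg : Continuous g) : Integrable fun u => g u * K u ^ 2 := by
  have hsupp : (Function.support fun u => g u * K u ^ 2) ⊆ Set.Icc (-1) 1 := fun u hu =>
    hK.support_subset_Icc (ne_zero_pow two_ne_zero (right_ne_zero_of_mul hu))
  rw [← integrableOn_iff_integrable_of_support_subset hsupp]
  exact (hg.continuousOn.mul (hK.continuousOn_Icc.pow 2)).integrableOn_compact isCompact_Icc

lemma integrable_sq (hK : IsProductKernel d K) : Integrable fun u => K u ^ 2 := by
  simpa only [one_mul] using hK.integrable_continuous_mul_sq (continuous_const (y := 1))

lemma integrable_abs_rpow_mul_sq (hK : IsProductKernel d K) (i : Fin d) {b : ℝ} (hb : 0 ≤ b) :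
    Integrable fun u : Vec d => |u i| ^ b * K u ^ 2 :=
  hK.integrable_continuous_mul_sq ((continuous_apply i).abs.rpow_const fun _ => Or.inr hb)

end IsProductKernel

theorem statement7_general {d : ℕ} {K : Vec d → ℝ} (heven : IsCoordEven fun u => K u ^ 2)
    (hK : Integrable fun u => K u ^ 2) {β : Vec d} (hβ : ∀ i, 0 < β i ∧ β i ≤ 2)
    (hmoment : ∀ i, Integrable fun u : Vec d => |u i| ^ β i * K u ^ 2) {L : ℝ} (hL : 0 < L)
    {p : Vec d → ℝ} (hmeas : Measurable p) (hnonneg : ∀ x, 0 ≤ p x) (hp : HolderAniso d β L p)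
    (t : Vec d) (n : ℕ) {h : Vec d}
    (hh : ∀ i, 0 < h i ∧ h i ≤ c8const d K β L * p t ^ (β i)⁻¹) :
    (1 / 2) * K2sq d K * p t / (n * ∏ i, h i) ≤ sigmaSq d n K p h t ∧
      sigmaSq d n K p h t ≤ (3 / 2) * K2sq d K * p t / (n * ∏ i, h i) := by
  have hbias : |(∫ u, K u ^ 2 * p (t - h * u)) - K2sq d K * p t|
      ≤ ∑ i, L * h i ^ β i * ∫ u, |u i| ^ β i * K u ^ 2 := by
    simpa only [K2sq, partialShift_univ, abs_sq, abs_of_pos (hh _).1] using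
      hp.abs_integral_mul_partialShift_sub_le (fun i => (hβ i).2) hmeas hnonneg hK heven hmoment
        t h Finset.univ
  have hsum : ∑ i, L * h i ^ β i * (∫ u, |u i| ^ β i * K u ^ 2) ≤ K2sq d K * p t / 2 := by
    refine (Finset.sum_le_card_nsmul _ _ _ fun i _ => mul_rpow_mul_moment_le_of_le_c8const hK hL.le
      (hβ i).1 (hh i).1.le (hnonneg t) (hh i).2).trans ?_
    have hmass : 0 ≤ K2sq d K * p t / 2 :=
      div_nonneg (mul_nonneg (integral_nonneg fun u => sq_nonneg _) (hnonneg t)) zero_le_two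
    calc Finset.univ.card • (K2sq d K * p t / (2 * d))
        = (d / d : ℝ) * (K2sq d K * p t / 2) := by
          rw [Finset.card_fin, nsmul_eq_mul]
          ring
      _ ≤ K2sq d K * p t / 2 := mul_le_of_le_one_left hmass (div_self_le_one _)
  obtain ⟨hlower, hupper⟩ := abs_le.1 (hbias.trans hsum)
  have hprod : 0 < ∏ i, h i := Finset.prod_pos fun i _ => (hh i).1
  rw [sigmaSq_eq n K p (fun i => (hh i).1.ne') t, abs_of_pos hprod]
  constructor <;> gcongr <;> linarith

/-- Lemma 5.1(i), variance sandwich.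
For `p ∈ 𝒫_d(β,L)` with `0 < β_i ≤ 2` and any bandwidth with
`0 < h_i ≤ c₈(β,L) p(t)^{1/β_i}`:
`(1/2)‖K‖₂² p(t)/(n ∏ h_i) ≤ n⁻¹((K_h)² ∗ p)(t) ≤ (3/2)‖K‖₂² p(t)/(n ∏ h_i)`. -/
theorem statement7 (d : ℕ) (hd : 1 ≤ d) (K : Vec d → ℝ) (hK : IsProductKernel d K)
    (β : Vec d) (hβ : ∀ i, 0 < β i ∧ β i ≤ 2) (L : ℝ) (hL : 0 < L)
    (p : Vec d → ℝ) (hp : Pclass d β L p) (t : Vec d) (n : ℕ) (h : Vec d)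
    (hh : ∀ i, 0 < h i ∧ h i ≤ c8const d K β L * p t ^ (β i)⁻¹) :
    (1 / 2) * K2sq d K * p t / (n * ∏ i, h i) ≤ sigmaSq d n K p h t ∧
      sigmaSq d n K p h t ≤ (3 / 2) * K2sq d K * p t / (n * ∏ i, h i) :=
  statement7_general (fun k u => congrArg (· ^ 2) (hK.isCoordEven k u)) hK.integrable_sq hβ
    (fun i => hK.integrable_abs_rpow_mul_sq i (hβ i).1.le) hL hp.1.1 hp.1.2.1 hp.2 t n hh
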